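/- The alternating central-binomial sum ∑_{k≥0} (−1)^k·C(2k,k)/(16^k·(2k+1)²) equals π²/10, where C(2k,k) denotes the central binomial coefficient. -/

import Mathlib

open Real

/-!
The series is `2 S(1/2)`, where `S(t) = ∫₀ᵗ arsinh s / s ds` is expanded by integrating the binomial
series of `(1 + s²)^(-1/2)` twice. Substituting `s = sinh u` gives
`S(sinh a) = ∫₀ᵃ u coth u du = a² / 2 + Li₂(1 - exp (-2a)) / 2`. For `sinh a = 1/2` one has
`a = log φ` and `1 - exp (-2a) = φ⁻¹`, with `φ` the golden ratio. Since `x = φ⁻¹` satisfies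
`1 - x = x²`, Euler's reflection formula at `x`, the duplication formula at `x` and Landen's
identity at `x²` are linear relations between `Li₂ x`, `Li₂ (-x)` and `Li₂ (x²)`; they determine
`Li₂ φ⁻¹ = π² / 10 - (log φ)²`.
-/

open Set
open scoped goldenRatio

theorem eq_of_hasDerivAt_zero {f : ℝ → ℝ} {a b : ℝ} (hab : a ≤ b) (hf : ContinuousOn f (Icc a b))
    (hf' : ∀ x ∈ Ioo a b, HasDerivAt f 0 x) : f b = f a := by
  rcases hab.eq_or_lt with rfl | hab
  · rfl
  · obtain ⟨c, -, hc⟩ := exists_hasDerivAt_eq_slope f (fun _ ↦ 0) hab hf hf'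
    rw [eq_comm, div_eq_zero_iff] at hc
    exact sub_eq_zero.1 (hc.resolve_right (sub_pos.2 hab).ne')

theorem hasDerivAt_tsum_mul_pow_succ_div {𝕜 ι : Type*} [RCLike 𝕜] {a : ι → 𝕜} {n : ι → ℕ} {C : ℝ}
    (ha : ∀ i, ‖a i‖ ≤ C) (hn : n.Injective) {x : 𝕜} (hx : ‖x‖ < 1) :
    HasDerivAt (fun y ↦ ∑' i, a i * (y ^ (n i + 1) / (n i + 1))) (∑' i, a i * x ^ n i) x := by
  obtain ⟨r, hxr, hr⟩ := exists_between hx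
  have hr0 : 0 ≤ r := (norm_nonneg x).trans hxr.le
  have hsum : Summable fun i ↦ C * r ^ n i :=
    ((summable_geometric_of_lt_one hr0 hr).comp_injective hn).mul_left C
  refine hasDerivAt_tsum_of_isPreconnected (g' := fun i y ↦ a i * y ^ n i) hsum Metric.isOpen_ball
    (convex_ball (0 : 𝕜) r).isPreconnected (fun i y _ ↦ ?_) (fun i y hy ↦ ?_)
    (Metric.mem_ball_self ((norm_nonneg x).trans_lt hxr)) (by simp) (by simpa using hxr)
  · have hne : (n i : 𝕜) + 1 ≠ 0 := Nat.cast_add_one_ne_zero _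
    convert! ((hasDerivAt_pow (n i + 1) y).div_const ((n i : 𝕜) + 1)).const_mul (a i) using 1
    rw [Nat.add_sub_cancel, Nat.cast_add_one, mul_div_cancel_left₀ _ hne]
  · have hyr : ‖y‖ ≤ r := (mem_ball_zero_iff.1 hy).le
    have hC : 0 ≤ C := (norm_nonneg _).trans (ha i)
    rw [norm_mul, norm_pow]
    gcongr
    exact ha i

/-- The dilogarithm `Li₂ x = ∑_{k ≥ 1} x ^ k / k ^ 2` of a real number, with the summation index
shifted to start at `0`. The series converges only for `|x| ≤ 1`. -/
noncomputable def dilog (x : ℝ) : ℝ :=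
  ∑' k : ℕ, x ^ (k + 1) / ((k : ℝ) + 1) ^ 2

theorem summable_one_div_nat_succ_sq : Summable fun k : ℕ ↦ 1 / ((k : ℝ) + 1) ^ 2 := by
  simpa using (summable_nat_add_iff 1).2 hasSum_zeta_two.summable

theorem norm_pow_succ_div_succ_sq_le {x : ℝ} (hx : |x| ≤ 1) (k : ℕ) :
    ‖x ^ (k + 1) / ((k : ℝ) + 1) ^ 2‖ ≤ 1 / ((k : ℝ) + 1) ^ 2 := by
  rw [norm_div, norm_pow, norm_of_nonneg (by positivity : (0 : ℝ) ≤ (k + 1) ^ 2)]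
  gcongr
  exact pow_le_one₀ (norm_nonneg x) hx

theorem summable_dilog {x : ℝ} (hx : |x| ≤ 1) :
    Summable fun k : ℕ ↦ x ^ (k + 1) / ((k : ℝ) + 1) ^ 2 :=
  .of_norm_bounded summable_one_div_nat_succ_sq (norm_pow_succ_div_succ_sq_le hx)

theorem continuousOn_dilog : ContinuousOn dilog (Icc (-1) 1) :=
  continuousOn_tsum (fun _ ↦ by fun_prop) summable_one_div_nat_succ_sq
    fun k _ hx ↦ norm_pow_succ_div_succ_sq_le (abs_le.2 hx) k

theorem hasDerivAt_dilog {x : ℝ} (hx : |x| < 1) (hx0 : x ≠ 0) :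
    HasDerivAt dilog (-log (1 - x) / x) x := by
  have hcoeff (k : ℕ) : ‖1 / ((k : ℝ) + 1)‖ ≤ 1 := by
    rw [norm_of_nonneg (by positivity)]
    exact div_le_one_of_le₀ (by simp) (by positivity)
  convert! hasDerivAt_tsum_mul_pow_succ_div hcoeff Function.injective_id hx using 1
  · funext y
    exact tsum_congr fun k ↦ by simp only [id]; field_simp
  · rw [← (hasSum_pow_div_log_of_abs_lt_one hx).tsum_eq, div_eq_iff hx0, ← tsum_mul_right]
    exact tsum_congr fun k ↦ by simp only [id]; ring

@[simp]
theorem dilog_zero : dilog 0 = 0 := by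
  simp [dilog]

@[simp]
theorem dilog_one : dilog 1 = π ^ 2 / 6 := by
  have hzeta := (hasSum_nat_add_iff' 1).2 hasSum_zeta_two
  simpa [dilog] using hzeta.tsum_eq

theorem dilog_add_dilog_neg {x : ℝ} (hx : |x| ≤ 1) :
    dilog x + dilog (-x) = dilog (x ^ 2) / 2 := by
  have hinj : Function.Injective fun k : ℕ ↦ 2 * k + 1 :=
    (add_left_injective 1).comp (mul_right_injective₀ two_ne_zero)
  have hsupport : (Function.support fun k : ℕ ↦ x ^ (k + 1) / ((k : ℝ) + 1) ^ 2
      + (-x) ^ (k + 1) / ((k : ℝ) + 1) ^ 2) ⊆ range fun k ↦ 2 * k + 1 := by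
    refine fun k hk ↦ (Nat.not_even_iff_odd.1 fun heven ↦ hk ?_).imp fun _ h ↦ h.symm
    simp [heven.add_one.neg_pow, neg_div]
  rw [dilog, dilog, ← (summable_dilog hx).tsum_add (summable_dilog (by rwa [abs_neg])),
    ← hinj.tsum_eq hsupport, dilog, ← tsum_div_const]
  refine tsum_congr fun k ↦ ?_
  rw [Even.neg_pow ⟨k + 1, by ring⟩, ← pow_mul]
  push_cast
  field_simp
  ring

theorem hasDerivAt_log_one_sub {x : ℝ} (hx : x ≠ 1) :
    HasDerivAt (fun y ↦ log (1 - y)) (-1 / (1 - x)) x :=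
  ((hasDerivAt_id x).const_sub 1).log (sub_ne_zero.2 hx.symm)

theorem hasDerivAt_dilog_neg_div_one_sub {x : ℝ} (hx : x < 1 / 2) (hx0 : x ≠ 0) :
    HasDerivAt (fun y ↦ dilog (-y / (1 - y))) (log (1 - x) / (x * (1 - x))) x := by
  have hpos : 0 < 1 - x := by linarith
  have harg : |-x / (1 - x)| < 1 := by
    rw [abs_div, abs_neg, abs_of_pos hpos, div_lt_one hpos, abs_lt]
    constructor <;> linarith
  have hlog : log (1 - -x / (1 - x)) = -log (1 - x) := by
    rw [← log_inv]
    congr 1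
    field_simp
    ring
  convert! (hasDerivAt_dilog harg (div_ne_zero (neg_ne_zero.2 hx0) hpos.ne')).comp x
    ((hasDerivAt_neg x).div ((hasDerivAt_id x).const_sub 1) hpos.ne') using 1
  rw [hlog]
  simp only [id]
  field_simp
  ring

theorem dilog_add_dilog_neg_div_one_sub {x : ℝ} (hx0 : 0 ≤ x) (hx : x ≤ 1 / 2) :
    dilog x + dilog (-x / (1 - x)) = -log (1 - x) ^ 2 / 2 := by
  suffices dilog x + dilog (-x / (1 - x)) + log (1 - x) ^ 2 / 2 = 0 by linarith
  convert! eq_of_hasDerivAt_zero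
    (f := fun y ↦ dilog y + dilog (-y / (1 - y)) + log (1 - y) ^ 2 / 2) hx0 ?_ ?_ using 1
  · simp
  · have hpos : ∀ y ∈ Icc 0 x, 0 < 1 - y := fun y hy ↦ by linarith [hy.2]
    refine ((continuousOn_dilog.mono fun y hy ↦ ⟨by linarith [hy.1], by linarith [hy.2]⟩).add
      (continuousOn_dilog.comp ?_ fun y hy ↦ ⟨?_, ?_⟩)).add
      (((continuousOn_const.sub continuousOn_id).log fun y hy ↦ (hpos y hy).ne').pow 2
        |>.div_const 2)
    · exact continuousOn_neg.div (by fun_prop) fun y hy ↦ (hpos y hy).ne'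
    · rw [le_div_iff₀ (hpos y hy)]
      linarith [hy.2]
    · rw [div_le_iff₀ (hpos y hy)]
      linarith
  · rintro y ⟨hy0, hyx⟩
    have hpos : 0 < 1 - y := by linarith
    have hdilog := hasDerivAt_dilog (x := y) (abs_lt.2 ⟨by linarith, by linarith⟩) hy0.ne'
    have hcomp := hasDerivAt_dilog_neg_div_one_sub (hyx.trans_le hx) hy0.ne'
    have hsq := ((hasDerivAt_log_one_sub (x := y) (by linarith)).pow 2).div_const 2
    convert! (hdilog.add hcomp).add hsq using 1
    field_simp
    ring

-- At `0`, factor out the zero of `log (1 - x)` and use the continuity of `x * log x`; the point `1`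
-- follows by the symmetry `x ↦ 1 - x`.
theorem continuous_log_mul_log_one_sub : Continuous fun x ↦ log x * log (1 - x) := by
  have h_ne_one : ∀ x ≠ (1 : ℝ), ContinuousAt (fun y ↦ log y * log (1 - y)) x := by
    intro x hx
    have hslope : ContinuousAt (dslope (fun y ↦ log (1 - y)) 0) x := by
      rcases eq_or_ne x 0 with rfl | hx0
      · exact continuousAt_dslope_same.2 (hasDerivAt_log_one_sub hx).differentiableAt
      · exact (continuousAt_dslope_of_ne hx0).2 (hasDerivAt_log_one_sub hx).continuousAt
    convert! continuous_mul_log.continuousAt.mul hslope using 1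
    funext y
    have hy := sub_smul_dslope (fun y ↦ log (1 - y)) 0 y
    simp only [sub_zero, log_one, smul_eq_mul] at hy
    rw [Pi.mul_apply, ← hy]
    ring
  refine continuous_iff_continuousAt.2 fun x ↦ ?_
  rcases eq_or_ne x 1 with rfl | hx
  · have hsymm := (h_ne_one (1 - 1) (by simp)).comp (f := fun y ↦ 1 - y) (by fun_prop)
    simpa [Function.comp_def, mul_comm] using hsymm
  · exact h_ne_one x hx

theorem dilog_add_dilog_one_sub {x : ℝ} (hx0 : 0 ≤ x) (hx1 : x ≤ 1) :
    dilog x + dilog (1 - x) = π ^ 2 / 6 - log x * log (1 - x) := by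
  suffices dilog x + dilog (1 - x) + log x * log (1 - x) = π ^ 2 / 6 by linarith
  convert! eq_of_hasDerivAt_zero
    (f := fun y ↦ dilog y + dilog (1 - y) + log y * log (1 - y)) hx0 ?_ ?_ using 1
  · simp
  · refine ((continuousOn_dilog.mono fun y hy ↦ ⟨by linarith [hy.1], by linarith [hy.2]⟩).add
      (continuousOn_dilog.comp (by fun_prop) fun y hy ↦ ⟨?_, ?_⟩)).add
      continuous_log_mul_log_one_sub.continuousOn
    · linarith [hy.2]
    · linarith [hy.1]
  · rintro y ⟨hy0, hyx⟩
    have hpos : 0 < 1 - y := by linarith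
    have hdilog := hasDerivAt_dilog (x := y) (abs_lt.2 ⟨by linarith, by linarith⟩) hy0.ne'
    have hcomp := (hasDerivAt_dilog (x := 1 - y) (abs_lt.2 ⟨by linarith, by linarith⟩)
      hpos.ne').comp y ((hasDerivAt_id y).const_sub 1)
    have hlog := (hasDerivAt_log hy0.ne').mul (hasDerivAt_log_one_sub (x := y) (by linarith))
    convert! (hdilog.add hcomp).add hlog using 1
    rw [sub_sub_cancel]
    field_simp
    ring

theorem one_sub_inv_goldenRatio : 1 - φ⁻¹ = φ⁻¹ ^ 2 := by
  rw [inv_goldenRatio, neg_sq, goldenConj_sq]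
  ring

theorem dilog_inv_goldenRatio : dilog φ⁻¹ = π ^ 2 / 10 - log φ ^ 2 := by
  have hpos : 0 < φ⁻¹ := inv_pos.2 goldenRatio_pos
  have hlt : φ⁻¹ < 1 := inv_lt_one_of_one_lt₀ one_lt_goldenRatio
  have hsq := one_sub_inv_goldenRatio
  have hsub : 1 - φ⁻¹ ^ 2 = φ⁻¹ := by rw [← hsq, sub_sub_cancel]
  have hdiv : -φ⁻¹ ^ 2 / φ⁻¹ = -φ⁻¹ := by field_simp
  have hreflection := dilog_add_dilog_one_sub hpos.le hlt.le
  have hduplication := dilog_add_dilog_neg (abs_le.2 ⟨by linarith, hlt.le⟩)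
  have hlanden := dilog_add_dilog_neg_div_one_sub (sq_nonneg φ⁻¹) (by nlinarith)
  rw [hsq, log_pow, log_inv] at hreflection
  rw [hsub, hdiv, log_inv] at hlanden
  push_cast at hreflection
  linarith

theorem ringChoose_neg_half {K : Type*} [Field K] [CharZero K] (k : ℕ) :
    Ring.choose (-1 / 2 : K) k = (-1) ^ k * k.centralBinom / 4 ^ k := by
  induction k with
  | zero => simp
  | succ k ih =>
    have hk : (k : K) + 1 ≠ 0 := Nat.cast_add_one_ne_zero k
    have hchoose : ((k : K) + 1) * Ring.choose (-1 / 2 : K) (k + 1)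
        = Ring.choose (-1 / 2 : K) k * (-1 / 2 - k) := by
      simpa using Ring.choose_smul_choose (-1 / 2 : K) k.le_succ
    have hcentral : ((k : K) + 1) * (k + 1).centralBinom = 2 * (2 * k + 1) * k.centralBinom := by
      exact_mod_cast k.succ_mul_centralBinom_succ
    refine mul_left_cancel₀ hk ?_
    rw [hchoose, ih, ← mul_div_assoc, mul_left_comm, hcentral]
    field_simp
    ring

theorem abs_ringChoose_neg_half_le_one (k : ℕ) : |Ring.choose (-1 / 2 : ℝ) k| ≤ 1 := by
  rw [ringChoose_neg_half, abs_div, abs_mul, abs_neg_one_pow, one_mul, Nat.abs_cast,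
    abs_of_pos (by positivity), div_le_one (by positivity)]
  exact_mod_cast k.centralBinom_le_four_pow

theorem tsum_ringChoose_neg_half_eq_inv_sqrt {x : ℝ} (hx : |x| < 1) :
    ∑' k : ℕ, Ring.choose (-1 / 2 : ℝ) k * x ^ k = (√(1 + x))⁻¹ := by
  have hpos : 0 ≤ 1 + x := by linarith [(abs_lt.1 hx).1]
  have hseries := (one_add_rpow_hasFPowerSeriesOnBall_zero (a := -1 / 2)).hasSum (y := x)
    (by simpa [← ofReal_norm] using hx)
  rw [sqrt_eq_rpow, ← rpow_neg hpos, ← neg_div]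
  simpa [-FormalMultilinearSeries.apply_eq_prod_smul_coeff] using hseries.tsum_eq

theorem tsum_ringChoose_neg_half_eq_arsinh {t : ℝ} (ht : |t| < 1) :
    ∑' k : ℕ, Ring.choose (-1 / 2 : ℝ) k * (t ^ (2 * k + 1) / (2 * k + 1)) = arsinh t := by
  have hderiv : ∀ x ∈ Ioo (-1 : ℝ) 1, HasDerivAt
      (fun y : ℝ ↦ ∑' k : ℕ, Ring.choose (-1 / 2 : ℝ) k * (y ^ (2 * k + 1) / (2 * k + 1)))
      (√(1 + x ^ 2))⁻¹ x := by
    intro x hx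
    have hx1 : |x| < 1 := abs_lt.2 hx
    rw [← tsum_ringChoose_neg_half_eq_inv_sqrt (by simpa using hx1)]
    simpa [pow_mul, pow_succ] using hasDerivAt_tsum_mul_pow_succ_div abs_ringChoose_neg_half_le_one
      (mul_right_injective₀ two_ne_zero) (x := x) hx1
  exact isOpen_Ioo.eqOn_of_deriv_eq isPreconnected_Ioo
    (fun x hx ↦ (hderiv x hx).differentiableAt.differentiableWithinAt)
    differentiable_arsinh.differentiableOn
    (fun x hx ↦ (hderiv x hx).deriv.trans (hasDerivAt_arsinh x).deriv.symm)
    (x := 0) (by simp) (by simp) (abs_lt.1 ht)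

/-- The function `∫₀ᵗ arsinh s / s ds`, defined by its power series at `0`, which converges only for
`|t| ≤ 1`; its value at `1 / 2` is half of the alternating central binomial sum. -/
noncomputable def arsinhIntegral (t : ℝ) : ℝ :=
  ∑' k : ℕ, Ring.choose (-1 / 2 : ℝ) k * (t ^ (2 * k + 1) / (2 * (k : ℝ) + 1) ^ 2)

@[simp]
theorem arsinhIntegral_zero : arsinhIntegral 0 = 0 := by
  simp [arsinhIntegral]

theorem hasDerivAt_arsinhIntegral {t : ℝ} (ht : |t| < 1) :
    HasDerivAt arsinhIntegral
      (∑' k : ℕ, Ring.choose (-1 / 2 : ℝ) k / (2 * k + 1) * t ^ (2 * k)) t := by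
  have hcoeff (k : ℕ) : ‖Ring.choose (-1 / 2 : ℝ) k / (2 * k + 1)‖ ≤ 1 := by
    rw [norm_div, norm_of_nonneg (by positivity : (0 : ℝ) ≤ 2 * k + 1)]
    exact div_le_one_of_le₀
      ((abs_ringChoose_neg_half_le_one k).trans (by simp)) (by positivity)
  convert! hasDerivAt_tsum_mul_pow_succ_div hcoeff (mul_right_injective₀ two_ne_zero) ht using 1
  funext y
  refine tsum_congr fun k ↦ ?_
  push_cast
  field_simp

theorem tsum_ringChoose_neg_half_eq_arsinh_div {t : ℝ} (ht : |t| < 1) (ht0 : t ≠ 0) :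
    ∑' k : ℕ, Ring.choose (-1 / 2 : ℝ) k / (2 * k + 1) * t ^ (2 * k) = arsinh t / t := by
  rw [eq_div_iff ht0, ← tsum_mul_right, ← tsum_ringChoose_neg_half_eq_arsinh ht]
  exact tsum_congr fun k ↦ by ring

theorem cosh_div_sinh_eq (u : ℝ) :
    cosh u / sinh u = (1 + exp (-2 * u)) / (1 - exp (-2 * u)) := by
  have hE : exp (-2 * u) = exp (-u) / exp u := by
    rw [← exp_sub]
    ring_nf
  rw [cosh_eq, sinh_eq, hE]
  field_simp

theorem hasDerivAt_arsinhIntegral_sinh {u : ℝ} (hu0 : 0 < u) (hu : sinh u < 1) :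
    HasDerivAt (fun v ↦ arsinhIntegral (sinh v)) (u * (cosh u / sinh u)) u := by
  have hpos : 0 < sinh u := sinh_pos_iff.2 hu0
  have habs : |sinh u| < 1 := by rwa [abs_of_pos hpos]
  convert! (hasDerivAt_arsinhIntegral habs).comp u (hasDerivAt_sinh u) using 1
  rw [tsum_ringChoose_neg_half_eq_arsinh_div habs hpos.ne', arsinh_sinh]
  ring

theorem hasDerivAt_dilog_one_sub_exp {u : ℝ} (hu : 0 < u) :
    HasDerivAt (fun v ↦ dilog (1 - exp (-2 * v)))
      (4 * u * exp (-2 * u) / (1 - exp (-2 * u))) u := by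
  have hexp : exp (-2 * u) < 1 := exp_lt_one_iff.2 (by linarith)
  have harg : |1 - exp (-2 * u)| < 1 := abs_lt.2 ⟨by linarith, by linarith [exp_pos (-2 * u)]⟩
  convert! (hasDerivAt_dilog harg (sub_pos.2 hexp).ne').comp u
    (((hasDerivAt_id u).const_mul (-2)).exp.const_sub 1) using 1
  rw [sub_sub_cancel, log_exp]
  simp only [id]
  ring

theorem arsinhIntegral_sinh {a : ℝ} (ha0 : 0 ≤ a) (ha : sinh a < 1) :
    arsinhIntegral (sinh a) = a ^ 2 / 2 + dilog (1 - exp (-2 * a)) / 2 := by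
  rw [← sub_eq_zero]
  convert! eq_of_hasDerivAt_zero (f := fun u ↦ arsinhIntegral (sinh u)
    - (u ^ 2 / 2 + dilog (1 - exp (-2 * u)) / 2)) ha0 ?_ ?_ using 1
  · simp
  · refine ContinuousOn.sub (fun u hu ↦ ?_) (ContinuousOn.add (by fun_prop)
      ((continuousOn_dilog.comp (by fun_prop) fun u hu ↦ ?_).div_const 2))
    · have habs : |sinh u| < 1 := by
        rw [abs_of_nonneg (sinh_nonneg_iff.2 hu.1)]
        exact (sinh_le_sinh.2 hu.2).trans_lt ha
      exact ((hasDerivAt_arsinhIntegral habs).comp u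
        (hasDerivAt_sinh u)).continuousAt.continuousWithinAt
    · have hexp : exp (-2 * u) ≤ 1 := exp_le_one_iff.2 (by linarith [hu.1])
      constructor <;> linarith [exp_pos (-2 * u)]
  · rintro u ⟨hu0, hua⟩
    convert! (hasDerivAt_arsinhIntegral_sinh hu0 ((sinh_lt_sinh.2 hua).trans ha)).sub
      (((hasDerivAt_pow 2 u).div_const 2).add
        ((hasDerivAt_dilog_one_sub_exp hu0).div_const 2)) using 1
    have hne : 1 - exp (-2 * u) ≠ 0 := (sub_pos.2 (exp_lt_one_iff.2 (by linarith))).ne'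
    rw [cosh_div_sinh_eq, pow_one]
    generalize exp (-2 * u) = e at hne ⊢
    push_cast
    field_simp
    ring

theorem sinh_log_goldenRatio : sinh (log φ) = 1 / 2 := by
  rw [sinh_log goldenRatio_pos, inv_goldenRatio, sub_neg_eq_add, goldenRatio_add_goldenConj]

theorem one_sub_exp_neg_two_mul_log_goldenRatio : 1 - exp (-2 * log φ) = φ⁻¹ := by
  have hexp : exp (-2 * log φ) = φ⁻¹ ^ 2 := by
    rw [← exp_log (inv_pos.2 goldenRatio_pos), ← exp_nat_mul, log_inv]
    simp
  rw [hexp, ← one_sub_inv_goldenRatio, sub_sub_cancel]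

theorem arsinhIntegral_one_half : arsinhIntegral (1 / 2) = π ^ 2 / 20 := by
  have hsinh : sinh (log φ) < 1 := by
    rw [sinh_log_goldenRatio]
    norm_num
  rw [← sinh_log_goldenRatio, arsinhIntegral_sinh (log_nonneg one_lt_goldenRatio.le) hsinh,
    one_sub_exp_neg_two_mul_log_goldenRatio, dilog_inv_goldenRatio]
  ring

/-- `∑_{k≥0} (−1)^k·C(2k,k)/(16^k·(2k+1)²) = π²/10`. -/
theorem alternating_central_binom_sum :
    (∑' k : ℕ, (-1 : ℝ)^k * ((2 * k).choose k : ℝ) / (16^k * (2 * (k : ℝ) + 1)^2))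
      = π^2 / 10 := by
  calc _ = 2 * arsinhIntegral (1 / 2) := by
        rw [arsinhIntegral, ← tsum_mul_left]
        refine tsum_congr fun k ↦ ?_
        have hpow : (16 : ℝ) ^ k = 4 ^ k * 2 ^ (2 * k) := by
          rw [pow_mul, ← mul_pow]
          norm_num
        rw [ringChoose_neg_half, Nat.centralBinom_eq_two_mul_choose, hpow, one_div, inv_pow]
        field_simp
        ring
    _ = π ^ 2 / 10 := by
        rw [arsinhIntegral_one_half]
        ring
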